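/- Let c₀ > 0 and let φ : ℝ² × (−∞,0] → ℝ be twice continuously differentiable with ∂_zφ ≥ c₀ and |∇φ| + |∇²φ| ≤ 1/c₀ pointwise. Then there exists a constant C depending only on c₀ such that every continuously differentiable vector field v : ℝ² × (−∞,0] → ℝ³ for which v and ∇v are square-integrable on S satisfies ∫_S |∇v|² dy dz ≤ C ( ∫_S |S^φ v|² ∂_zφ dy dz + ∫_S |v|² dy dz ). -/

import Mathlib

open MeasureTheory

/-- The `i`-th partial derivative of a function on `ℝ³` (coordinates `x = (y₁, y₂, z)`,
with `z` the coordinate of index `2`). -/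
noncomputable def pd (i : Fin 3) (f : (Fin 3 → ℝ) → ℝ) (x : Fin 3 → ℝ) : ℝ :=
  fderiv ℝ f x (Pi.single i 1)

/-- The operators `∂ᵢ^φ` associated to `φ`. -/
noncomputable def pdphi (φ : (Fin 3 → ℝ) → ℝ) (i : Fin 3) (f : (Fin 3 → ℝ) → ℝ)
    (x : Fin 3 → ℝ) : ℝ :=
  if i = 2 then pd 2 f x / pd 2 φ x
  else pd i f x - pd i φ x / pd 2 φ x * pd 2 f x

/-- The lower half-space `S = ℝ² × (−∞, 0)` of `ℝ³`. -/
def lowerHalf : Set (Fin 3 → ℝ) := {x | x 2 < 0}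

/-!
For `C¹` compactly supported fields on the whole space, `∫ ∂ᵢwⱼ ∂ⱼwᵢ = ∫ ∂ᵢwᵢ ∂ⱼwⱼ`, so
`2 ∫ |Sw|² = ∫ |∇w|² + ∫ (div w)²`; cutoffs remove the compact support at the cost of `∫ |w|²`.

Pulling a field back as a `1`-form, `w ↦ Lᵀ w(L ·)`, transforms the symmetric gradient into
`Lᵀ (Sw) L`. A combination of three such pullbacks, under reflections of different ratios across the
boundary, extends a field on the half-space to a `C¹` field on the whole space while controlling
`|Sw|² + |w|²`.

Likewise, if `A` is the Jacobian of `(y, z) ↦ (y, φ(y, z))`, then `w = Aᵀ v` satisfies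
`Sw = Aᵀ (S^φ v) A + v_z ∇²φ`, so the inequality for `v` is the half-space inequality for `w`, up to
terms of order zero in `v`.
-/

section SymmetryOfSecondDerivatives

open scoped Convolution

variable {E : Type*} [NormedAddCommGroup E] [NormedSpace ℝ E] [FiniteDimensional ℝ E]
  [MeasurableSpace E] [BorelSpace E] {μ : Measure E} [μ.IsAddHaarMeasure] {f g : E → ℝ}

theorem fderiv_convolution_right_apply (hf : Continuous f) (hg : ContDiff ℝ 1 g)
    (hg' : HasCompactSupport g) (x u : E) :
    fderiv ℝ (f ⋆[ContinuousLinearMap.mul ℝ ℝ, μ] g) x u =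
      (f ⋆[ContinuousLinearMap.mul ℝ ℝ, μ] fun y => fderiv ℝ g y u) x := by
  rw [(hg'.hasFDerivAt_convolution_right (ContinuousLinearMap.mul ℝ ℝ)
    hf.locallyIntegrable hg x).fderiv]
  exact convolution_precompR_apply _ hf.locallyIntegrable (hg'.fderiv ℝ)
    (hg.continuous_fderiv one_ne_zero) x u

theorem convolution_mul_comm :
    f ⋆[ContinuousLinearMap.mul ℝ ℝ, μ] g = g ⋆[ContinuousLinearMap.mul ℝ ℝ, μ] f := by
  rw [← convolution_flip]
  congr 1
  ext
  simp

theorem fderiv_convolution_left_apply (hf : ContDiff ℝ 1 f) (hg : Continuous g)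
    (hf' : HasCompactSupport f) (x u : E) :
    fderiv ℝ (f ⋆[ContinuousLinearMap.mul ℝ ℝ, μ] g) x u =
      ((fun y => fderiv ℝ f y u) ⋆[ContinuousLinearMap.mul ℝ ℝ, μ] g) x := by
  rw [convolution_mul_comm, fderiv_convolution_right_apply hg hf hf', convolution_mul_comm]

-- Both sides are `∂_w ∂_u (f ⋆ g)`: the convolution is `C²` although the factors are only `C¹`.
theorem convolution_fderiv_fderiv_comm (hf : ContDiff ℝ 1 f) (hg : ContDiff ℝ 1 g)
    (hf' : HasCompactSupport f) (hg' : HasCompactSupport g) (u w x : E) :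
    ((fun y => fderiv ℝ f y u) ⋆[ContinuousLinearMap.mul ℝ ℝ, μ] fun y => fderiv ℝ g y w) x =
      ((fun y => fderiv ℝ f y w) ⋆[ContinuousLinearMap.mul ℝ ℝ, μ] fun y => fderiv ℝ g y u) x := by
  have hfu : Continuous fun y => fderiv ℝ f y u :=
    (hf.continuous_fderiv one_ne_zero).clm_apply continuous_const
  have hgu : Continuous fun y => fderiv ℝ g y u :=
    (hg.continuous_fderiv one_ne_zero).clm_apply continuous_const
  rw [← fderiv_convolution_right_apply hfu hg hg', ← fderiv_convolution_left_apply hf hgu hf']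
  congr 2
  ext y
  rw [← fderiv_convolution_left_apply hf hg.continuous hf',
    ← fderiv_convolution_right_apply hf.continuous hg hg']

theorem integral_fderiv_mul_fderiv_comm (hf : ContDiff ℝ 1 f) (hg : ContDiff ℝ 1 g)
    (hf' : HasCompactSupport f) (hg' : HasCompactSupport g) (u w : E) :
    ∫ x, fderiv ℝ f x u * fderiv ℝ g x w ∂μ = ∫ x, fderiv ℝ f x w * fderiv ℝ g x u ∂μ := by
  have h := convolution_fderiv_fderiv_comm (μ := μ) hf (hg.comp contDiff_neg) hf'
    (hg'.comp_homeomorph (Homeomorph.neg E)) u w 0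
  have hneg (x v : E) : fderiv ℝ (g ∘ Neg.neg) x v = -fderiv ℝ g (-x) v := by
    have := (hg.differentiable one_ne_zero (-x)).hasFDerivAt.comp x (hasFDerivAt_id x).neg
    rw [this.fderiv]
    simp
  simpa only [convolution_def, hneg, zero_sub, neg_neg, ContinuousLinearMap.mul_apply', mul_neg,
    integral_neg, neg_inj] using h

end SymmetryOfSecondDerivatives

section MatrixNorm

open scoped Matrix Matrix.Norms.Frobenius

open WithLp (toLp)

/-- The symmetric part `(M + Mᵀ) / 2` of a square matrix; the symmetric part of the Jacobian matrix
of a vector field is its symmetric gradient. -/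
noncomputable def symPart {ι : Type*} : Matrix ι ι ℝ →ₗ[ℝ] Matrix ι ι ℝ :=
  (2⁻¹ : ℝ) • (LinearMap.id + (Matrix.transposeLinearEquiv ι ι ℝ ℝ).toLinearMap)

theorem symPart_apply {ι : Type*} (M : Matrix ι ι ℝ) : symPart M = (2⁻¹ : ℝ) • (M + Mᵀ) := rfl

variable {ι : Type*} [Fintype ι]

theorem frobenius_norm_sq (M : Matrix ι ι ℝ) : ‖M‖ ^ 2 = ∑ i, ∑ j, M i j ^ 2 := by
  rw [Matrix.frobenius_norm_def, ← Real.rpow_natCast, ← Real.rpow_mul (by positivity)]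
  simp

theorem frobenius_norm_vecMulVec_le (u v : ι → ℝ) :
    ‖Matrix.vecMulVec u v‖ ≤ ‖toLp 2 u‖ * ‖toLp 2 v‖ := by
  rw [Matrix.vecMulVec_eq Unit, ← Matrix.frobenius_norm_replicateCol (ι := Unit),
    ← Matrix.frobenius_norm_replicateRow (ι := Unit)]
  exact Matrix.frobenius_norm_mul _ _

theorem norm_toLp_mulVec_le (M : Matrix ι ι ℝ) (v : ι → ℝ) :
    ‖toLp 2 (M *ᵥ v)‖ ≤ ‖M‖ * ‖toLp 2 v‖ := by
  rw [← Matrix.frobenius_norm_replicateCol (ι := Unit),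
    ← Matrix.frobenius_norm_replicateCol (ι := Unit), Matrix.replicateCol_mulVec]
  exact Matrix.frobenius_norm_mul _ _

theorem norm_transpose_mul_mul_le (L M : Matrix ι ι ℝ) : ‖Lᵀ * M * L‖ ≤ ‖L‖ ^ 2 * ‖M‖ :=
  calc ‖Lᵀ * M * L‖ ≤ ‖Lᵀ * M‖ * ‖L‖ := Matrix.frobenius_norm_mul _ _
    _ ≤ ‖Lᵀ‖ * ‖M‖ * ‖L‖ := by gcongr; exact Matrix.frobenius_norm_mul _ _
    _ = ‖L‖ ^ 2 * ‖M‖ := by rw [Matrix.frobenius_norm_transpose]; ring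

theorem norm_symPart_le (M : Matrix ι ι ℝ) : ‖symPart M‖ ≤ ‖M‖ := by
  have := norm_add_le M Mᵀ
  rw [Matrix.frobenius_norm_transpose] at this
  rw [symPart_apply, norm_smul, Real.norm_of_nonneg (by norm_num)]
  linarith

theorem symPart_transpose_mul_mul (L M : Matrix ι ι ℝ) :
    symPart (Lᵀ * M * L) = Lᵀ * symPart M * L := by
  simp only [symPart_apply, Matrix.transpose_mul, Matrix.transpose_transpose, Matrix.mul_smul,
    Matrix.smul_mul, Matrix.mul_add, Matrix.add_mul, Matrix.mul_assoc]

theorem two_mul_norm_symPart_sq (M : Matrix ι ι ℝ) :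
    2 * ‖symPart M‖ ^ 2 = ‖M‖ ^ 2 + (M * M).trace := by
  have hterm (i j : ι) : 2 * (2⁻¹ * (M i j + M j i)) ^ 2 =
      2⁻¹ * M i j ^ 2 + 2⁻¹ * M j i ^ 2 + M i j * M j i := by ring
  have hswap : ∑ i, ∑ j, M j i ^ 2 = ∑ i, ∑ j, M i j ^ 2 := Finset.sum_comm
  simp only [frobenius_norm_sq, symPart_apply, Matrix.smul_apply, Matrix.add_apply,
    Matrix.transpose_apply, smul_eq_mul, Finset.mul_sum, hterm, Finset.sum_add_distrib,
    Matrix.trace, Matrix.diag_apply, Matrix.mul_apply]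
  simp only [← Finset.mul_sum, hswap]
  ring

theorem norm_sum_sq_le {F κ : Type*} [SeminormedAddCommGroup F] (s : Finset κ) {z : κ → F}
    {c t : κ → ℝ} (hz : ∀ k ∈ s, ‖z k‖ ≤ c k * t k) :
    ‖∑ k ∈ s, z k‖ ^ 2 ≤ (∑ k ∈ s, c k ^ 2) * ∑ k ∈ s, t k ^ 2 :=
  calc ‖∑ k ∈ s, z k‖ ^ 2 ≤ (∑ k ∈ s, c k * t k) ^ 2 := by gcongr; exact norm_sum_le_of_le s hz
    _ ≤ _ := Finset.sum_mul_sq_le_sq_mul_sq s c t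

end MatrixNorm

section Jacobian

open scoped Matrix Matrix.Norms.Frobenius

open WithLp (toLp)

variable {ι : Type*} [Fintype ι] [DecidableEq ι]

/-- The partial derivative `∂ᵢf`. -/
noncomputable def partialDeriv (i : ι) (f : (ι → ℝ) → ℝ) (x : ι → ℝ) : ℝ :=
  fderiv ℝ f x (Pi.single i 1)

/-- The gradient `(∂ᵢf)ᵢ` as a plain coordinate vector. -/
noncomputable def coordGrad (f : (ι → ℝ) → ℝ) (x : ι → ℝ) : ι → ℝ :=
  fun i => partialDeriv i f x

/-- The Jacobian matrix of a vector field, with entry `∂ⱼvᵢ` in row `i` and column `j`. -/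
noncomputable def jacobian (v : (ι → ℝ) → ι → ℝ) (x : ι → ℝ) : Matrix ι ι ℝ :=
  LinearMap.toMatrix' (fderiv ℝ v x).toLinearMap

variable {v w : (ι → ℝ) → ι → ℝ} {f : (ι → ℝ) → ℝ} {x : ι → ℝ}

theorem jacobian_apply (hv : DifferentiableAt ℝ v x) (i j : ι) :
    jacobian v x i j = partialDeriv j (fun y => v y i) x := by
  simp [jacobian, partialDeriv, LinearMap.toMatrix'_apply, fderiv_apply hv]

theorem jacobian_eq_jacobian_iff : jacobian v x = jacobian w x ↔ fderiv ℝ v x = fderiv ℝ w x := by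
  simp [jacobian]

theorem jacobian_smul (hf : DifferentiableAt ℝ f x) (hv : DifferentiableAt ℝ v x) :
    jacobian (f • v) x = f x • jacobian v x + Matrix.vecMulVec (v x) (coordGrad f x) := by
  ext i j
  simp [jacobian, fderiv_smul hf hv, LinearMap.toMatrix'_apply, Matrix.vecMulVec_apply, coordGrad,
    partialDeriv, mul_comm]

theorem jacobian_comp_add_right (a : ι → ℝ) :
    jacobian (fun y => v (y + a)) x = jacobian v (x + a) := by
  rw [jacobian, jacobian, fderiv_comp_add_right]

theorem continuousAt_jacobian (hv : ContDiffAt ℝ 1 v x) : ContinuousAt (jacobian v) x := by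
  have hv' : ContinuousAt (fderiv ℝ v) x := (hv.fderiv_right (m := 0) le_rfl).continuousAt
  refine continuousAt_pi.2 fun i => continuousAt_pi.2 fun j => ?_
  simp only [jacobian, LinearMap.toMatrix'_apply]
  exact (continuous_apply i).continuousAt.comp (hv'.clm_apply continuousAt_const)

theorem norm_toLp_coordGrad_le (f : (ι → ℝ) → ℝ) (x : ι → ℝ) :
    ‖toLp 2 (coordGrad f x)‖ ≤ √(Fintype.card ι) * ‖fderiv ℝ f x‖ := by
  have hentry (i : ι) : coordGrad f x i ^ 2 ≤ ‖fderiv ℝ f x‖ ^ 2 := by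
    have := (fderiv ℝ f x).le_opNorm (Pi.single i 1)
    rw [Pi.norm_single, norm_one, mul_one] at this
    exact sq_le_sq' (neg_le_of_abs_le this) (le_of_abs_le this)
  rw [EuclideanSpace.norm_eq, ← Real.sqrt_sq (norm_nonneg (fderiv ℝ f x)),
    ← Real.sqrt_mul (Nat.cast_nonneg _)]
  refine Real.sqrt_le_sqrt ?_
  simpa using Finset.sum_le_card_nsmul Finset.univ _ _ fun i _ => hentry i

end Jacobian

section WholeSpace

open scoped Matrix Matrix.Norms.Frobenius

open WithLp (toLp)

variable {ι : Type*} [Fintype ι] [DecidableEq ι] {w : (ι → ℝ) → ι → ℝ}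

theorem integrable_jacobian_mul_jacobian (hw : ContDiff ℝ 1 w) (hw' : HasCompactSupport w)
    (i j k l : ι) : Integrable fun x => jacobian w x i j * jacobian w x k l := by
  have hcont : Continuous (jacobian w) :=
    continuous_iff_continuousAt.2 fun x => continuousAt_jacobian hw.contDiffAt
  refine ((hcont.matrix_elem i j).mul (hcont.matrix_elem k l)).integrable_of_hasCompactSupport
    (HasCompactSupport.mul_right ?_)
  exact (hw'.fderiv ℝ).comp_left (g := fun L : (ι → ℝ) →L[ℝ] (ι → ℝ) =>
    LinearMap.toMatrix' L.toLinearMap i j) (by simp)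

theorem integral_trace_jacobian_sq (hw : ContDiff ℝ 1 w) (hw' : HasCompactSupport w) :
    ∫ x, (jacobian w x * jacobian w x).trace = ∫ x, (jacobian w x).trace ^ 2 := by
  have hprod := integrable_jacobian_mul_jacobian hw hw'
  have hcomp (i : ι) : ContDiff ℝ 1 fun y => w y i := contDiff_pi.1 hw i
  have hcomp' (i : ι) : HasCompactSupport fun y => w y i :=
    hw'.comp_left (g := fun z : ι → ℝ => z i) rfl
  have hswap (i j : ι) : ∫ x, jacobian w x i j * jacobian w x j i =
      ∫ x, jacobian w x i i * jacobian w x j j := by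
    simp only [jacobian_apply (hw.differentiable one_ne_zero _)]
    exact integral_fderiv_mul_fderiv_comm (hcomp i) (hcomp j) (hcomp' i) (hcomp' j) _ _
  simp only [Matrix.trace, Matrix.diag_apply, Matrix.mul_apply, sq, Finset.sum_mul_sum]
  simp_rw [integral_finsetSum _ fun _ _ => integrable_finsetSum _ fun _ _ => hprod _ _ _ _,
    integral_finsetSum _ fun _ _ => hprod _ _ _ _, hswap]

theorem lintegral_norm_jacobian_sq_le_of_hasCompactSupport (hw : ContDiff ℝ 1 w)
    (hw' : HasCompactSupport w) :
    ∫⁻ x, ENNReal.ofReal (‖jacobian w x‖ ^ 2) ≤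
      ∫⁻ x, ENNReal.ofReal (2 * ‖symPart (jacobian w x)‖ ^ 2) := by
  have hprod := integrable_jacobian_mul_jacobian hw hw'
  have hgrad : Integrable fun x => ‖jacobian w x‖ ^ 2 := by
    simp only [frobenius_norm_sq]
    refine integrable_finsetSum _ fun i _ => integrable_finsetSum _ fun j _ => ?_
    simpa only [sq] using hprod i j i j
  have htrace : Integrable fun x => (jacobian w x * jacobian w x).trace := by
    simp only [Matrix.trace, Matrix.diag_apply, Matrix.mul_apply]
    exact integrable_finsetSum _ fun i _ => integrable_finsetSum _ fun j _ => hprod i j j i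
  have hsym : Integrable fun x => 2 * ‖symPart (jacobian w x)‖ ^ 2 := by
    simp only [two_mul_norm_symPart_sq]
    exact hgrad.add htrace
  rw [← ofReal_integral_eq_lintegral_ofReal hgrad (.of_forall fun x => sq_nonneg _),
    ← ofReal_integral_eq_lintegral_ofReal hsym (.of_forall fun x => by positivity)]
  refine ENNReal.ofReal_le_ofReal ?_
  calc ∫ x, ‖jacobian w x‖ ^ 2
      ≤ (∫ x, ‖jacobian w x‖ ^ 2) + ∫ x, (jacobian w x).trace ^ 2 :=
        le_add_of_nonneg_right (integral_nonneg fun x => sq_nonneg _)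
    _ = ∫ x, (‖jacobian w x‖ ^ 2 + (jacobian w x * jacobian w x).trace) := by
        rw [integral_add hgrad htrace, integral_trace_jacobian_sq hw hw']
    _ = ∫ x, 2 * ‖symPart (jacobian w x)‖ ^ 2 := by simp only [two_mul_norm_symPart_sq]

theorem exists_contDiff_cutoff (E : Type*) [NormedAddCommGroup E] [NormedSpace ℝ E]
    [FiniteDimensional ℝ E] :
    ∃ B : ℝ, ∀ R ≥ 1, ∃ χ : E → ℝ, ContDiff ℝ 1 χ ∧ HasCompactSupport χ ∧ (∀ x, |χ x| ≤ 1) ∧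
      (∀ x, ‖fderiv ℝ χ x‖ ≤ B) ∧ ∀ x ∈ Metric.ball 0 R, χ =ᶠ[nhds x] 1 := by
  let b : ContDiffBump (0 : E) := ⟨1, 2, one_pos, one_lt_two⟩
  have hb : ContDiff ℝ 1 b := b.contDiff
  obtain ⟨B, hB⟩ := (hb.continuous_fderiv one_ne_zero).bounded_above_of_compact_support
    (b.hasCompactSupport.fderiv ℝ)
  refine ⟨B, fun R hR => ⟨fun x => b (R⁻¹ • x), hb.comp (contDiff_const_smul _), ?_, ?_, ?_, ?_⟩⟩
  · exact b.hasCompactSupport.comp_homeomorph (Homeomorph.smulOfNeZero R⁻¹ (by positivity))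
  · exact fun x => abs_le.2 ⟨by linarith [b.nonneg (x := R⁻¹ • x)], b.le_one⟩
  · intro x
    have hR' : ‖R⁻¹‖ ≤ 1 := by
      rw [norm_inv, Real.norm_of_nonneg (by linarith)]
      exact inv_le_one_of_one_le₀ hR
    rw [fderiv_comp_smul, norm_smul]
    exact (mul_le_of_le_one_left (norm_nonneg _) hR').trans (hB _)
  · intro x hx
    filter_upwards [Metric.isOpen_ball.mem_nhds hx] with y hy
    refine b.one_of_mem_closedBall ?_
    rw [mem_ball_zero_iff] at hy
    rw [mem_closedBall_zero_iff, norm_smul, norm_inv, Real.norm_of_nonneg (by linarith),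
      inv_mul_le_iff₀ (by linarith), mul_one]
    exact hy.le

/-- The density `|sym ∇w|² + |w|²`, whose integral is the right-hand side of Korn's inequality. -/
noncomputable def kornDensity (w : (ι → ℝ) → ι → ℝ) (x : ι → ℝ) : ℝ :=
  ‖symPart (jacobian w x)‖ ^ 2 + ‖toLp 2 (w x)‖ ^ 2

theorem kornDensity_nonneg (w : (ι → ℝ) → ι → ℝ) (x : ι → ℝ) : 0 ≤ kornDensity w x := by
  unfold kornDensity
  positivity

theorem kornDensity_comp_add_right (w : (ι → ℝ) → ι → ℝ) (a x : ι → ℝ) :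
    kornDensity (fun y => w (y + a)) x = kornDensity w (x + a) := by
  rw [kornDensity, jacobian_comp_add_right, kornDensity]

theorem continuousAt_kornDensity {x : ι → ℝ} (hw : ContDiffAt ℝ 1 w x) :
    ContinuousAt (kornDensity w) x := by
  have hsym : Continuous (symPart : Matrix ι ι ℝ →ₗ[ℝ] Matrix ι ι ℝ) :=
    symPart.continuous_of_finiteDimensional
  have hgrad := hsym.continuousAt.comp (continuousAt_jacobian hw)
  have hval := (PiLp.continuous_toLp 2 fun _ : ι => ℝ).continuousAt.comp hw.continuousAt
  exact (hgrad.norm.pow 2).add (hval.norm.pow 2)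

theorem two_mul_norm_symPart_jacobian_smul_sq_le {χ : (ι → ℝ) → ℝ} {x : ι → ℝ} {B : ℝ}
    (hχ : DifferentiableAt ℝ χ x) (hw : DifferentiableAt ℝ w x) (hχ1 : |χ x| ≤ 1)
    (hχB : ‖fderiv ℝ χ x‖ ≤ B) :
    2 * ‖symPart (jacobian (χ • w) x)‖ ^ 2 ≤
      4 * (1 + Fintype.card ι * B ^ 2) * kornDensity w x := by
  have hgrad : ‖toLp 2 (coordGrad χ x)‖ ≤ √(Fintype.card ι) * B :=
    (norm_toLp_coordGrad_le χ x).trans (by gcongr)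
  have hcross : ‖symPart (Matrix.vecMulVec (w x) (coordGrad χ x))‖ ≤
      ‖toLp 2 (w x)‖ * (√(Fintype.card ι) * B) :=
    (norm_symPart_le _).trans ((frobenius_norm_vecMulVec_le _ _).trans (by gcongr))
  have hnorm : ‖symPart (jacobian (χ • w) x)‖ ≤
      ‖symPart (jacobian w x)‖ + ‖toLp 2 (w x)‖ * (√(Fintype.card ι) * B) := by
    rw [jacobian_smul hχ hw, map_add, map_smul]
    refine (norm_add_le _ _).trans (add_le_add ?_ hcross)
    rw [norm_smul]
    exact mul_le_of_le_one_left (norm_nonneg _) hχ1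
  have hcard : 0 ≤ Fintype.card ι * B ^ 2 := by positivity
  calc 2 * ‖symPart (jacobian (χ • w) x)‖ ^ 2
      ≤ 2 * (‖symPart (jacobian w x)‖ + ‖toLp 2 (w x)‖ * (√(Fintype.card ι) * B)) ^ 2 := by
        gcongr
    _ ≤ 2 * (2 * (‖symPart (jacobian w x)‖ ^ 2 +
          (‖toLp 2 (w x)‖ * (√(Fintype.card ι) * B)) ^ 2)) := by
        gcongr
        exact add_sq_le
    _ = 4 * (‖symPart (jacobian w x)‖ ^ 2 + Fintype.card ι * B ^ 2 * ‖toLp 2 (w x)‖ ^ 2) := by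
        rw [mul_pow, mul_pow, Real.sq_sqrt (Nat.cast_nonneg _)]
        ring
    _ ≤ 4 * (1 + Fintype.card ι * B ^ 2) * kornDensity w x := by
        unfold kornDensity
        nlinarith [mul_nonneg hcard (sq_nonneg ‖symPart (jacobian w x)‖),
          sq_nonneg ‖toLp 2 (w x)‖]

theorem exists_korn_wholeSpace (ι : Type*) [Fintype ι] [DecidableEq ι] :
    ∃ C : ℝ, 0 < C ∧ ∀ w : (ι → ℝ) → ι → ℝ, ContDiff ℝ 1 w →
      ∫⁻ x, ENNReal.ofReal (‖jacobian w x‖ ^ 2) ≤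
        ENNReal.ofReal C * ∫⁻ x, ENNReal.ofReal (kornDensity w x) := by
  obtain ⟨B, hB⟩ := exists_contDiff_cutoff (ι → ℝ)
  refine ⟨4 * (1 + Fintype.card ι * B ^ 2), by positivity, fun w hw => ?_⟩
  have hball (n : ℕ) : ∫⁻ x in Metric.ball (0 : ι → ℝ) (n + 1),
      ENNReal.ofReal (‖jacobian w x‖ ^ 2) ≤
        ENNReal.ofReal (4 * (1 + Fintype.card ι * B ^ 2)) *
          ∫⁻ x, ENNReal.ofReal (kornDensity w x) := by
    obtain ⟨χ, hχ, hχc, hχ1, hχB, hχ_eq⟩ := hB (n + 1) (by simp)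
    calc ∫⁻ x in Metric.ball (0 : ι → ℝ) (n + 1), ENNReal.ofReal (‖jacobian w x‖ ^ 2)
        = ∫⁻ x in Metric.ball (0 : ι → ℝ) (n + 1),
            ENNReal.ofReal (‖jacobian (χ • w) x‖ ^ 2) := by
          refine setLIntegral_congr_fun Metric.isOpen_ball.measurableSet fun x hx => ?_
          have hloc : χ • w =ᶠ[nhds x] w := by
            filter_upwards [hχ_eq x hx] with y hy
            simp [hy]
          simp only [jacobian, hloc.fderiv_eq]
      _ ≤ ∫⁻ x, ENNReal.ofReal (‖jacobian (χ • w) x‖ ^ 2) := setLIntegral_le_lintegral _ _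
      _ ≤ ∫⁻ x, ENNReal.ofReal (2 * ‖symPart (jacobian (χ • w) x)‖ ^ 2) :=
          lintegral_norm_jacobian_sq_le_of_hasCompactSupport (hχ.smul hw) hχc.smul_right
      _ ≤ ∫⁻ x, ENNReal.ofReal (4 * (1 + Fintype.card ι * B ^ 2)) *
            ENNReal.ofReal (kornDensity w x) := by
          refine lintegral_mono fun x => ?_
          rw [← ENNReal.ofReal_mul (by positivity)]
          exact ENNReal.ofReal_le_ofReal (two_mul_norm_symPart_jacobian_smul_sq_le
            (hχ.differentiable one_ne_zero x) (hw.differentiable one_ne_zero x) (hχ1 x) (hχB x))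
      _ = _ := lintegral_const_mul' _ _ ENNReal.ofReal_ne_top
  have hmono : Monotone fun n : ℕ => Metric.ball (0 : ι → ℝ) (n + 1) := fun n k hnk =>
    Metric.ball_subset_ball (by gcongr)
  rw [← setLIntegral_univ, ← Metric.iUnion_ball_nat_succ (0 : ι → ℝ),
    setLIntegral_iUnion_of_directed _ hmono.directed_le]
  exact iSup_le hball

end WholeSpace

section Gluing

variable {E F : Type*} [NormedAddCommGroup E] [NormedSpace ℝ E] [NormedAddCommGroup F]
  [NormedSpace ℝ F] {ℓ : E → ℝ} {f g : E → F}

theorem hasFDerivAt_ite_nonpos (hℓ : Continuous ℓ) (hf : ∀ x, ℓ x ≤ 0 → DifferentiableAt ℝ f x)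
    (hg : ∀ x, 0 ≤ ℓ x → DifferentiableAt ℝ g x) (hfg : ∀ x, ℓ x = 0 → f x = g x)
    (hfg' : ∀ x, ℓ x = 0 → fderiv ℝ f x = fderiv ℝ g x) (x : E) :
    HasFDerivAt (fun y => if ℓ y ≤ 0 then f y else g y)
      (if ℓ x ≤ 0 then fderiv ℝ f x else fderiv ℝ g x) x := by
  have hnonpos {y : E} (hy : ℓ y ≤ 0) : (if ℓ y ≤ 0 then f y else g y) = f y := if_pos hy
  have hnonneg {y : E} (hy : 0 ≤ ℓ y) : (if ℓ y ≤ 0 then f y else g y) = g y := by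
    split_ifs with hy'
    exacts [hfg y (le_antisymm hy' hy), rfl]
  rcases lt_trichotomy (ℓ x) 0 with hx | hx | hx
  · rw [if_pos hx.le]
    refine (hf x hx.le).hasFDerivAt.congr_of_eventuallyEq ?_
    filter_upwards [(isOpen_lt hℓ continuous_const).mem_nhds hx] with y hy
    exact hnonpos (le_of_lt hy)
  · have hcover : {y | ℓ y ≤ 0} ∪ {y | 0 ≤ ℓ y} = Set.univ :=
      Set.eq_univ_of_forall fun y => le_total (ℓ y) 0
    rw [if_pos hx.le, ← hasFDerivWithinAt_univ, ← hcover]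
    refine HasFDerivWithinAt.union ?_ ?_
    · exact (hf x hx.le).hasFDerivAt.hasFDerivWithinAt.congr (fun y hy => hnonpos hy)
        (hnonpos hx.le)
    · rw [hfg' x hx]
      exact (hg x hx.ge).hasFDerivAt.hasFDerivWithinAt.congr (fun y hy => hnonneg hy)
        (hnonneg hx.ge)
  · rw [if_neg hx.not_ge]
    refine (hg x hx.le).hasFDerivAt.congr_of_eventuallyEq ?_
    filter_upwards [(isOpen_lt continuous_const hℓ).mem_nhds hx] with y hy
    exact hnonneg (le_of_lt hy)

theorem contDiff_one_ite_nonpos (hℓ : Continuous ℓ) (hf : ∀ x, ℓ x ≤ 0 → ContDiffAt ℝ 1 f x)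
    (hg : ∀ x, 0 ≤ ℓ x → ContDiffAt ℝ 1 g x) (hfg : ∀ x, ℓ x = 0 → f x = g x)
    (hfg' : ∀ x, ℓ x = 0 → fderiv ℝ f x = fderiv ℝ g x) :
    ContDiff ℝ 1 fun x => if ℓ x ≤ 0 then f x else g x := by
  refine contDiff_one_iff_hasFDerivAt.2 ⟨_, ?_, hasFDerivAt_ite_nonpos hℓ
    (fun x hx => (hf x hx).differentiableAt one_ne_zero)
    (fun x hx => (hg x hx).differentiableAt one_ne_zero) hfg hfg'⟩
  have hf' : ContinuousOn (fderiv ℝ f) {x | ℓ x ≤ 0} := fun x hx =>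
    ((hf x hx).fderiv_right (m := 0) le_rfl).continuousAt.continuousWithinAt
  have hg' : ContinuousOn (fderiv ℝ g) {x | 0 ≤ ℓ x} := fun x hx =>
    ((hg x hx).fderiv_right (m := 0) le_rfl).continuousAt.continuousWithinAt
  exact continuous_if_le hℓ continuous_const hf' hg' hfg'

end Gluing

theorem setLIntegral_comp_linearMap_le {E : Type*} [NormedAddCommGroup E] [NormedSpace ℝ E]
    [FiniteDimensional ℝ E] [MeasurableSpace E] [BorelSpace E] (μ : Measure E)
    [μ.IsAddHaarMeasure] {L : E →ₗ[ℝ] E} (hL : 1 ≤ |LinearMap.det L|) (s : Set E)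
    (F : E → ENNReal) : ∫⁻ x in L ⁻¹' s, F (L x) ∂μ ≤ ∫⁻ x in s, F x ∂μ := by
  have hdet : LinearMap.det L ≠ 0 := abs_pos.1 (zero_lt_one.trans_le hL)
  have hemb : MeasurableEmbedding L :=
    L.continuous_of_finiteDimensional.measurableEmbedding
      (LinearMap.equivOfDetNeZero L hdet).injective
  have hmap : μ.map L ≤ μ := by
    rw [Measure.map_linearMap_addHaar_eq_smul_addHaar μ hdet, abs_inv]
    refine Measure.le_iff.2 fun t _ => mul_le_of_le_one_left' ?_
    exact ENNReal.ofReal_le_one.2 (inv_le_one_of_one_le₀ hL)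
  rw [← hemb.lintegral_map, ← hemb.restrict_map]
  exact lintegral_mono' (Measure.restrict_mono le_rfl hmap) le_rfl

section CovectorPullback

open scoped Matrix Matrix.Norms.Frobenius

open WithLp (toLp)

variable {ι : Type*} [Fintype ι]

/-- The pullback `x ↦ Lᵀ w(Lx)` of the field `w`, viewed as a `1`-form, under the linear map with
matrix `L`. It is the transformation law of vector fields for which the symmetric gradient
transforms as a bilinear form. -/
def covectorPullback (L : Matrix ι ι ℝ) (w : (ι → ℝ) → ι → ℝ) (x : ι → ℝ) : ι → ℝ :=
  Lᵀ *ᵥ w (L *ᵥ x)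

variable {w : (ι → ℝ) → ι → ℝ} {x : ι → ℝ}

theorem contDiffAt_covectorPullback {L : Matrix ι ι ℝ} (hw : ContDiffAt ℝ 1 w (L *ᵥ x)) :
    ContDiffAt ℝ 1 (covectorPullback L w) x :=
  (Matrix.mulVecLin Lᵀ).toContinuousLinearMap.contDiff.contDiffAt.comp x
    (hw.comp x (Matrix.mulVecLin L).toContinuousLinearMap.contDiff.contDiffAt)

variable [DecidableEq ι] {κ : Type*} [Fintype κ]

theorem jacobian_sum_smul_covectorPullback (a : κ → ℝ) {L : κ → Matrix ι ι ℝ}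
    (hw : ∀ k, DifferentiableAt ℝ w (L k *ᵥ x)) :
    jacobian (fun y => ∑ k, a k • covectorPullback (L k) w y) x =
      ∑ k, a k • ((L k)ᵀ * jacobian w (L k *ᵥ x) * L k) := by
  have hderiv : HasFDerivAt (fun y => ∑ k, a k • covectorPullback (L k) w y)
      (∑ k, a k • (Matrix.mulVecLin (L k)ᵀ).toContinuousLinearMap.comp
        ((fderiv ℝ w (L k *ᵥ x)).comp (Matrix.mulVecLin (L k)).toContinuousLinearMap)) x :=
    HasFDerivAt.fun_sum fun k _ => HasFDerivAt.const_smul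
      ((Matrix.mulVecLin (L k)ᵀ).toContinuousLinearMap.hasFDerivAt.comp x
        ((hw k).hasFDerivAt.comp x
          (Matrix.mulVecLin (L k)).toContinuousLinearMap.hasFDerivAt)) (a k)
  rw [jacobian, hderiv.fderiv]
  simp [LinearMap.toMatrix'_comp, jacobian, ← Matrix.toLin'_apply', Matrix.mul_assoc]

theorem kornDensity_sum_smul_covectorPullback_le (a : κ → ℝ) {L : κ → Matrix ι ι ℝ}
    (hw : ∀ k, DifferentiableAt ℝ w (L k *ᵥ x)) :
    kornDensity (fun y => ∑ k, a k • covectorPullback (L k) w y) x ≤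
      (∑ k, (|a k| * ‖L k‖ ^ 2) ^ 2 + ∑ k, (|a k| * ‖L k‖) ^ 2) *
        ∑ k, kornDensity w (L k *ᵥ x) := by
  have hsym : ‖symPart (jacobian (fun y => ∑ k, a k • covectorPullback (L k) w y) x)‖ ^ 2 ≤
      (∑ k, (|a k| * ‖L k‖ ^ 2) ^ 2) * ∑ k, ‖symPart (jacobian w (L k *ᵥ x))‖ ^ 2 := by
    simp only [jacobian_sum_smul_covectorPullback a hw, map_sum, map_smul,
      symPart_transpose_mul_mul]
    refine norm_sum_sq_le _ fun k _ => ?_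
    rw [norm_smul, Real.norm_eq_abs, mul_assoc |a k|]
    gcongr
    exact norm_transpose_mul_mul_le _ _
  have hval : ‖toLp 2 (∑ k, a k • covectorPullback (L k) w x)‖ ^ 2 ≤
      (∑ k, (|a k| * ‖L k‖) ^ 2) * ∑ k, ‖toLp 2 (w (L k *ᵥ x))‖ ^ 2 := by
    rw [WithLp.toLp_sum]
    refine norm_sum_sq_le _ fun k _ => ?_
    rw [WithLp.toLp_smul, norm_smul, Real.norm_eq_abs, mul_assoc |a k|,
      ← Matrix.frobenius_norm_transpose (L k)]
    gcongr
    exact norm_toLp_mulVec_le _ _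
  simp only [kornDensity, Finset.sum_add_distrib]
  refine (add_le_add hsym hval).trans ?_
  rw [add_mul]
  gcongr <;> simp only [le_add_iff_nonneg_right, le_add_iff_nonneg_left] <;> positivity

end CovectorPullback

section Reflection

open scoped Matrix Matrix.Norms.Frobenius

open WithLp (toLp)

variable {ι : Type*} [DecidableEq ι]

/-- The matrix multiplying the `m`-th coordinate by `c` and fixing the others. -/
def coordScaling (m : ι) (c : ℝ) : Matrix ι ι ℝ :=
  Matrix.diagonal fun i => if i = m then c else 1

variable [Fintype ι] {m : ι} {c : ℝ} {x : ι → ℝ}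

theorem coordScaling_mulVec_self : (coordScaling m c *ᵥ x) m = c * x m := by
  simp [coordScaling, Matrix.mulVec_diagonal]

theorem coordScaling_mulVec_of_eq_zero (hx : x m = 0) : coordScaling m c *ᵥ x = x := by
  ext i
  by_cases hi : i = m <;> simp [coordScaling, Matrix.mulVec_diagonal, hi, hx]

theorem det_coordScaling : (coordScaling m c).det = c := by
  simp [coordScaling, Matrix.det_diagonal]

/-- The normal scalings of the three reflections entering `reflect`. -/
def reflScale : Fin 3 → ℝ := ![-1, -2, -3]

/-- The solution `a` of `∑ₖ aₖ sₖᵖ = 1` for `p = 0, 1, 2`, where `s` is `reflScale`: each tangential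
or normal index of `w` or `∇w` contributes a factor `1` or `sₖ` to its reflection. -/
def reflWeight : Fin 3 → ℝ := ![6, -8, 3]

theorem reflScale_le_neg_one (k : Fin 3) : reflScale k ≤ -1 := by
  fin_cases k <;> norm_num [reflScale]

theorem sum_reflWeight_mul_reflScale_pow (p : Fin 3) :
    ∑ k, reflWeight k * reflScale k ^ (p : ℕ) = 1 := by
  fin_cases p <;> simp [reflWeight, reflScale, Fin.sum_univ_three] <;> norm_num

/-- A combination of reflections of the field `w` across `{x | x m = 0}`, chosen to match `w` to
first order there. Covector pullbacks control its symmetric gradient by that of `w`. -/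
def reflect (m : ι) (w : (ι → ℝ) → ι → ℝ) (x : ι → ℝ) : ι → ℝ :=
  ∑ k, reflWeight k • covectorPullback (coordScaling m (reflScale k)) w x

/-- The extension of a field from `{x | x m ≤ 0}` to the whole space by `reflect`. -/
noncomputable def reflectExtend (m : ι) (w : (ι → ℝ) → ι → ℝ) (x : ι → ℝ) : ι → ℝ :=
  if x m ≤ 0 then w x else reflect m w x

theorem reflScale_mulVec_nonpos (hx : 0 ≤ x m) (k : Fin 3) :
    (coordScaling m (reflScale k) *ᵥ x) m ≤ 0 := by
  rw [coordScaling_mulVec_self]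
  exact mul_nonpos_of_nonpos_of_nonneg ((reflScale_le_neg_one k).trans (by norm_num)) hx

theorem reflect_of_eq_zero (w : (ι → ℝ) → ι → ℝ) (hx : x m = 0) : reflect m w x = w x := by
  ext i
  have hmoment : ∑ k, reflWeight k * (if i = m then reflScale k else 1) = 1 := by
    split_ifs
    · simpa using sum_reflWeight_mul_reflScale_pow 1
    · simpa using sum_reflWeight_mul_reflScale_pow 0
  simp only [reflect, covectorPullback, coordScaling_mulVec_of_eq_zero hx, Finset.sum_apply,
    Pi.smul_apply, smul_eq_mul]
  simp only [coordScaling, Matrix.diagonal_transpose, Matrix.mulVec_diagonal]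
  simp_rw [← mul_assoc, ← Finset.sum_mul, hmoment, one_mul]

variable {w : (ι → ℝ) → ι → ℝ}

theorem contDiffAt_reflect (hw : ∀ x, x m ≤ 0 → ContDiffAt ℝ 1 w x) (hx : 0 ≤ x m) :
    ContDiffAt ℝ 1 (reflect m w) x :=
  ContDiffAt.sum fun k _ =>
    (contDiffAt_covectorPullback (hw _ (reflScale_mulVec_nonpos hx k))).const_smul _

theorem jacobian_reflect
    (hw : ∀ k, DifferentiableAt ℝ w (coordScaling m (reflScale k) *ᵥ x)) :
    jacobian (reflect m w) x = ∑ k, reflWeight k • ((coordScaling m (reflScale k))ᵀ *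
      jacobian w (coordScaling m (reflScale k) *ᵥ x) * coordScaling m (reflScale k)) :=
  jacobian_sum_smul_covectorPullback reflWeight hw

theorem jacobian_reflect_of_eq_zero (hw : DifferentiableAt ℝ w x) (hx : x m = 0) :
    jacobian (reflect m w) x = jacobian w x := by
  have hfix (k : Fin 3) : coordScaling m (reflScale k) *ᵥ x = x :=
    coordScaling_mulVec_of_eq_zero hx
  have hmoment (i j : ι) : ∑ k, reflWeight k *
      ((if i = m then reflScale k else 1) * if j = m then reflScale k else 1) = 1 := by
    split_ifs
    · simpa [sq] using sum_reflWeight_mul_reflScale_pow 2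
    · simpa using sum_reflWeight_mul_reflScale_pow 1
    · simpa using sum_reflWeight_mul_reflScale_pow 1
    · simpa using sum_reflWeight_mul_reflScale_pow 0
  have hsum : jacobian (reflect m w) x = ∑ k, reflWeight k •
      ((coordScaling m (reflScale k))ᵀ * jacobian w x * coordScaling m (reflScale k)) := by
    simpa only [hfix] using jacobian_reflect (m := m) (x := x) (w := w) fun k => by rwa [hfix]
  have hterm (k : Fin 3) (i j : ι) : (reflWeight k • ((coordScaling m (reflScale k))ᵀ *
      jacobian w x * coordScaling m (reflScale k))) i j =
        reflWeight k * ((if i = m then reflScale k else 1) * if j = m then reflScale k else 1) *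
          jacobian w x i j := by
    simp only [coordScaling, Matrix.diagonal_transpose, Matrix.smul_apply, Matrix.mul_diagonal,
      Matrix.diagonal_mul, smul_eq_mul]
    ring
  ext i j
  rw [hsum, Matrix.sum_apply]
  simp_rw [hterm, ← Finset.sum_mul, hmoment, one_mul]

theorem contDiff_reflectExtend (hw : ∀ x, x m ≤ 0 → ContDiffAt ℝ 1 w x) :
    ContDiff ℝ 1 (reflectExtend m w) :=
  contDiff_one_ite_nonpos (continuous_apply m) hw (fun _ => contDiffAt_reflect hw)
    (fun _ hx => (reflect_of_eq_zero w hx).symm) fun x hx =>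
      (jacobian_eq_jacobian_iff.1 (jacobian_reflect_of_eq_zero
        ((hw x hx.le).differentiableAt one_ne_zero) hx)).symm

theorem jacobian_reflectExtend (hw : ∀ x, x m ≤ 0 → ContDiffAt ℝ 1 w x) (x : ι → ℝ) :
    jacobian (reflectExtend m w) x =
      if x m ≤ 0 then jacobian w x else jacobian (reflect m w) x := by
  have hderiv := hasFDerivAt_ite_nonpos (continuous_apply m)
    (fun x hx => (hw x hx).differentiableAt one_ne_zero)
    (fun _ hx => (contDiffAt_reflect hw hx).differentiableAt one_ne_zero)
    (fun _ hx => (reflect_of_eq_zero w hx).symm)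
    (fun x hx => (jacobian_eq_jacobian_iff.1 (jacobian_reflect_of_eq_zero
      ((hw x hx.le).differentiableAt one_ne_zero) hx)).symm) x
  have hfderiv : fderiv ℝ (reflectExtend m w) x = _ := hderiv.fderiv
  rw [jacobian, hfderiv]
  split_ifs <;> rfl

theorem kornDensity_reflectExtend (hw : ∀ x, x m ≤ 0 → ContDiffAt ℝ 1 w x) (x : ι → ℝ) :
    kornDensity (reflectExtend m w) x =
      if x m ≤ 0 then kornDensity w x else kornDensity (reflect m w) x := by
  rw [kornDensity, jacobian_reflectExtend hw, reflectExtend]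
  split_ifs <;> rfl

theorem exists_kornDensity_reflect_le (m : ι) :
    ∃ K : ℝ, 0 ≤ K ∧ ∀ (w : (ι → ℝ) → ι → ℝ) (x : ι → ℝ),
      (∀ k, DifferentiableAt ℝ w (coordScaling m (reflScale k) *ᵥ x)) →
        kornDensity (reflect m w) x ≤
          K * ∑ k, kornDensity w (coordScaling m (reflScale k) *ᵥ x) :=
  ⟨_, by positivity, fun _ _ hw => kornDensity_sum_smul_covectorPullback_le reflWeight hw⟩

theorem exists_setLIntegral_kornDensity_reflect_le (m : ι) :
    ∃ K : ℝ, 0 ≤ K ∧ ∀ w : (ι → ℝ) → ι → ℝ, (∀ x, x m ≤ 0 → ContDiffAt ℝ 1 w x) →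
      ∫⁻ x in {x | 0 ≤ x m}, ENNReal.ofReal (kornDensity (reflect m w) x) ≤
        ENNReal.ofReal K * ∫⁻ x in {x | x m ≤ 0}, ENNReal.ofReal (kornDensity w x) := by
  obtain ⟨K, hK, hle⟩ := exists_kornDensity_reflect_le m
  refine ⟨K * 3, by positivity, fun w hw => ?_⟩
  have hmeas : MeasurableSet {x : ι → ℝ | 0 ≤ x m} :=
    measurableSet_le measurable_const (measurable_pi_apply m)
  have hterm (k : Fin 3) : ∫⁻ x in {x | 0 ≤ x m},
      ENNReal.ofReal (kornDensity w (coordScaling m (reflScale k) *ᵥ x)) ≤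
        ∫⁻ x in {x | x m ≤ 0}, ENNReal.ofReal (kornDensity w x) := by
    refine (lintegral_mono_set fun x hx => ?_).trans (setLIntegral_comp_linearMap_le volume
      (L := Matrix.toLin' (coordScaling m (reflScale k))) ?_ {x | x m ≤ 0}
        fun x => ENNReal.ofReal (kornDensity w x))
    · exact reflScale_mulVec_nonpos hx k
    · rw [LinearMap.det_toLin', det_coordScaling]
      exact le_abs.2 (.inr (le_neg.1 (reflScale_le_neg_one k)))
  calc ∫⁻ x in {x | 0 ≤ x m}, ENNReal.ofReal (kornDensity (reflect m w) x)
      ≤ ∫⁻ x in {x | 0 ≤ x m}, ENNReal.ofReal K *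
          ∑ k, ENNReal.ofReal (kornDensity w (coordScaling m (reflScale k) *ᵥ x)) := by
        refine setLIntegral_mono' hmeas fun x hx => ?_
        rw [← ENNReal.ofReal_sum_of_nonneg fun k _ => kornDensity_nonneg _ _,
          ← ENNReal.ofReal_mul hK]
        exact ENNReal.ofReal_le_ofReal (hle w x fun k =>
          (hw _ (reflScale_mulVec_nonpos hx k)).differentiableAt one_ne_zero)
    _ = ENNReal.ofReal K * ∑ k, ∫⁻ x in {x | 0 ≤ x m},
          ENNReal.ofReal (kornDensity w (coordScaling m (reflScale k) *ᵥ x)) := by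
        rw [lintegral_const_mul' _ _ ENNReal.ofReal_ne_top, lintegral_finsetSum']
        intro k _
        refine (ContinuousOn.aemeasurable (fun x hx => ?_) hmeas).ennreal_ofReal
        exact ((continuousAt_kornDensity (hw _ (reflScale_mulVec_nonpos hx k))).comp
          (Continuous.matrix_mulVec continuous_const continuous_id).continuousAt).continuousWithinAt
    _ ≤ ENNReal.ofReal K *
          ∑ _k : Fin 3, ∫⁻ x in {x | x m ≤ 0}, ENNReal.ofReal (kornDensity w x) := by
        gcongr ENNReal.ofReal K * ∑ _k, ?_
        exact hterm _
    _ = _ := by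
        rw [Finset.sum_const, ENNReal.ofReal_mul hK, mul_assoc]
        simp

end Reflection

section HalfSpace

open scoped Matrix.Norms.Frobenius

variable {ι : Type*}

/-- The open lower half-space `{x | x m < 0}` with normal direction `m`. -/
def lowerHalfSpace (m : ι) : Set (ι → ℝ) := {x | x m < 0}

theorem isOpen_lowerHalfSpace (m : ι) : IsOpen (lowerHalfSpace m) :=
  isOpen_lt (continuous_apply m) continuous_const

theorem iUnion_setOf_le_neg_one_div (m : ι) :
    ⋃ n : ℕ, {x : ι → ℝ | x m ≤ -(1 / ((n : ℝ) + 1))} = lowerHalfSpace m := by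
  ext x
  simp only [lowerHalfSpace, Set.mem_iUnion, Set.mem_ofPred_eq]
  constructor
  · rintro ⟨n, hn⟩
    exact hn.trans_lt (neg_lt_zero.2 Nat.one_div_pos_of_nat)
  · intro hx
    obtain ⟨n, hn⟩ := exists_nat_one_div_lt (neg_pos.2 hx)
    exact ⟨n, (lt_neg.1 hn).le⟩

variable [Fintype ι] [DecidableEq ι]

theorem exists_lintegral_kornDensity_reflectExtend_le (m : ι) :
    ∃ K : ℝ, 0 < K ∧ ∀ w : (ι → ℝ) → ι → ℝ, (∀ x, x m ≤ 0 → ContDiffAt ℝ 1 w x) →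
      ∫⁻ x, ENNReal.ofReal (kornDensity (reflectExtend m w) x) ≤
        ENNReal.ofReal K * ∫⁻ x in {x | x m ≤ 0}, ENNReal.ofReal (kornDensity w x) := by
  obtain ⟨K, hK, hreflect⟩ := exists_setLIntegral_kornDensity_reflect_le m
  refine ⟨1 + K, by positivity, fun w hw => ?_⟩
  have hmeas : MeasurableSet {x : ι → ℝ | x m ≤ 0} :=
    measurableSet_le (measurable_pi_apply m) measurable_const
  have hlower : ∫⁻ x in {x | x m ≤ 0}, ENNReal.ofReal (kornDensity (reflectExtend m w) x) =
      ∫⁻ x in {x | x m ≤ 0}, ENNReal.ofReal (kornDensity w x) :=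
    setLIntegral_congr_fun hmeas fun x hx => by
      rw [kornDensity_reflectExtend hw, if_pos (show x m ≤ 0 from hx)]
  have hupper : ∫⁻ x in {x | x m ≤ 0}ᶜ, ENNReal.ofReal (kornDensity (reflectExtend m w) x) ≤
      ENNReal.ofReal K * ∫⁻ x in {x | x m ≤ 0}, ENNReal.ofReal (kornDensity w x) :=
    calc ∫⁻ x in {x | x m ≤ 0}ᶜ, ENNReal.ofReal (kornDensity (reflectExtend m w) x)
        = ∫⁻ x in {x | x m ≤ 0}ᶜ, ENNReal.ofReal (kornDensity (reflect m w) x) :=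
          setLIntegral_congr_fun hmeas.compl fun x hx => by
            rw [kornDensity_reflectExtend hw, if_neg (show ¬x m ≤ 0 from hx)]
      _ ≤ ∫⁻ x in {x | 0 ≤ x m}, ENNReal.ofReal (kornDensity (reflect m w) x) :=
          lintegral_mono_set fun x (hx : ¬x m ≤ 0) => (not_le.1 hx).le
      _ ≤ _ := hreflect w hw
  rw [← lintegral_add_compl _ hmeas, hlower, ENNReal.ofReal_add zero_le_one hK, add_mul,
    ENNReal.ofReal_one, one_mul]
  gcongr

theorem exists_korn_closedLowerHalfSpace (m : ι) :
    ∃ C : ℝ, 0 < C ∧ ∀ w : (ι → ℝ) → ι → ℝ, (∀ x, x m ≤ 0 → ContDiffAt ℝ 1 w x) →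
      ∫⁻ x in {x | x m ≤ 0}, ENNReal.ofReal (‖jacobian w x‖ ^ 2) ≤
        ENNReal.ofReal C * ∫⁻ x in {x | x m ≤ 0}, ENNReal.ofReal (kornDensity w x) := by
  obtain ⟨C, hC, hkorn⟩ := exists_korn_wholeSpace ι
  obtain ⟨K, hK, hextend⟩ := exists_lintegral_kornDensity_reflectExtend_le m
  refine ⟨C * K, by positivity, fun w hw => ?_⟩
  have hmeas : MeasurableSet {x : ι → ℝ | x m ≤ 0} :=
    measurableSet_le (measurable_pi_apply m) measurable_const
  calc ∫⁻ x in {x | x m ≤ 0}, ENNReal.ofReal (‖jacobian w x‖ ^ 2)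
      = ∫⁻ x in {x | x m ≤ 0}, ENNReal.ofReal (‖jacobian (reflectExtend m w) x‖ ^ 2) :=
        setLIntegral_congr_fun hmeas fun x hx => by
          rw [jacobian_reflectExtend hw, if_pos (show x m ≤ 0 from hx)]
    _ ≤ ∫⁻ x, ENNReal.ofReal (‖jacobian (reflectExtend m w) x‖ ^ 2) :=
        setLIntegral_le_lintegral _ _
    _ ≤ ENNReal.ofReal C * ∫⁻ x, ENNReal.ofReal (kornDensity (reflectExtend m w) x) :=
        hkorn _ (contDiff_reflectExtend hw)
    _ ≤ ENNReal.ofReal C *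
          (ENNReal.ofReal K * ∫⁻ x in {x | x m ≤ 0}, ENNReal.ofReal (kornDensity w x)) := by
        gcongr
        exact hextend w hw
    _ = _ := by rw [← mul_assoc, ← ENNReal.ofReal_mul hC.le]

theorem setLIntegral_setOf_le_comp_add_single (m : ι) (c δ : ℝ) (F : (ι → ℝ) → ENNReal) :
    ∫⁻ x in {x : ι → ℝ | x m ≤ c}, F (x + Pi.single m δ) = ∫⁻ x in {x | x m ≤ c + δ}, F x := by
  have hpre : (· + Pi.single m δ) ⁻¹' {x : ι → ℝ | x m ≤ c + δ} = {x : ι → ℝ | x m ≤ c} := by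
    ext x
    simp
  rw [← hpre]
  exact (measurePreserving_add_right volume _).setLIntegral_comp_preimage_emb
    (measurableEmbedding_addRight _) F _

theorem exists_korn_lowerHalfSpace (m : ι) :
    ∃ C : ℝ, 0 < C ∧ ∀ w : (ι → ℝ) → ι → ℝ, ContDiffOn ℝ 1 w (lowerHalfSpace m) →
      ∫⁻ x in lowerHalfSpace m, ENNReal.ofReal (‖jacobian w x‖ ^ 2) ≤
        ENNReal.ofReal C * ∫⁻ x in lowerHalfSpace m, ENNReal.ofReal (kornDensity w x) := by
  obtain ⟨C, hC, hkorn⟩ := exists_korn_closedLowerHalfSpace m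
  refine ⟨C, hC, fun w hw => ?_⟩
  have hshift {δ : ℝ} (hδ : 0 < δ) :
      ∫⁻ x in {x | x m ≤ -δ}, ENNReal.ofReal (‖jacobian w x‖ ^ 2) ≤
        ENNReal.ofReal C * ∫⁻ x in lowerHalfSpace m, ENNReal.ofReal (kornDensity w x) := by
    have hsub : {x : ι → ℝ | x m ≤ -δ} ⊆ lowerHalfSpace m := fun x hx =>
      lt_of_le_of_lt hx (neg_lt_zero.2 hδ)
    have hsmooth (x : ι → ℝ) (hx : x m ≤ 0) :
        ContDiffAt ℝ 1 (fun y => w (y + Pi.single m (-δ))) x := by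
      refine ContDiffAt.comp x (hw.contDiffAt ((isOpen_lowerHalfSpace m).mem_nhds (hsub ?_)))
        (contDiffAt_id.add contDiffAt_const)
      simpa using hx
    have h := hkorn _ hsmooth
    simp only [jacobian_comp_add_right, kornDensity_comp_add_right] at h
    rw [setLIntegral_setOf_le_comp_add_single m 0 (-δ) fun x => ENNReal.ofReal (‖jacobian w x‖ ^ 2),
      setLIntegral_setOf_le_comp_add_single m 0 (-δ) fun x => ENNReal.ofReal (kornDensity w x),
      zero_add] at h
    exact h.trans (by gcongr)
  have hmono : Monotone fun n : ℕ => {x : ι → ℝ | x m ≤ -(1 / ((n : ℝ) + 1))} :=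
    fun _ _ hnk x (hx : x m ≤ _) => hx.trans (neg_le_neg (Nat.one_div_le_one_div hnk))
  nth_rw 1 [← iUnion_setOf_le_neg_one_div m]
  rw [setLIntegral_iUnion_of_directed _ hmono.directed_le]
  exact iSup_le fun n => hshift Nat.one_div_pos_of_nat

end HalfSpace

theorem setLIntegral_ofReal_le_of_le_mul_add {α : Type*} [MeasurableSpace α] {μ : Measure α}
    {s : Set α} (hs : MeasurableSet s) {f g h : α → ℝ} {K : ℝ} (hK : 0 ≤ K)
    (hh : AEMeasurable h (μ.restrict s)) (hg₀ : ∀ x ∈ s, 0 ≤ g x) (hh₀ : ∀ x ∈ s, 0 ≤ h x)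
    (hle : ∀ x ∈ s, f x ≤ K * (g x + h x)) :
    ∫⁻ x in s, ENNReal.ofReal (f x) ∂μ ≤ ENNReal.ofReal K *
      ((∫⁻ x in s, ENNReal.ofReal (g x) ∂μ) + ∫⁻ x in s, ENNReal.ofReal (h x) ∂μ) := by
  rw [← lintegral_add_right' _ hh.ennreal_ofReal, ← lintegral_const_mul' _ _ ENNReal.ofReal_ne_top]
  refine setLIntegral_mono' hs fun x hx => ?_
  rw [← ENNReal.ofReal_add (hg₀ x hx) (hh₀ x hx), ← ENNReal.ofReal_mul hK]
  exact ENNReal.ofReal_le_ofReal (hle x hx)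

theorem norm_apply_smul_le {ι F : Type*} [Fintype ι] [SeminormedAddCommGroup F] [NormedSpace ℝ F]
    {M : ℝ} (u : ι → ℝ) (i : ι) {z : F} (hz : ‖z‖ ≤ M) :
    ‖u i • z‖ ≤ M * ‖WithLp.toLp 2 u‖ := by
  rw [norm_smul, mul_comm]
  exact mul_le_mul hz (PiLp.norm_apply_le (WithLp.toLp 2 u) i) (norm_nonneg _)
    ((norm_nonneg _).trans hz)

section GraphJacobian

open scoped Matrix Matrix.Norms.Frobenius

open WithLp (toLp)

variable {ι : Type*} [DecidableEq ι]

/-- The Jacobian matrix of the map that replaces the `m`-th coordinate of `x` by `φ x`, in terms of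
the gradient `p` of `φ`: the identity matrix with its `m`-th row replaced by `p`. -/
def graphJacobian (m : ι) (p : ι → ℝ) : Matrix ι ι ℝ :=
  1 + Matrix.vecMulVec (Pi.single m 1) (p - Pi.single m 1)

/-- The inverse of `graphJacobian m p` when `p m ≠ 0`. -/
noncomputable def graphJacobianInv (m : ι) (p : ι → ℝ) : Matrix ι ι ℝ :=
  1 - (p m)⁻¹ • Matrix.vecMulVec (Pi.single m 1) (p - Pi.single m 1)

variable [Fintype ι] {m : ι} {p : ι → ℝ}

theorem graphJacobian_mul_graphJacobianInv (hp : p m ≠ 0) :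
    graphJacobian m p * graphJacobianInv m p = 1 := by
  have hsq : Matrix.vecMulVec (Pi.single m 1) (p - Pi.single m 1) *
      Matrix.vecMulVec (Pi.single m 1) (p - Pi.single m 1) =
        (p m - 1) • Matrix.vecMulVec (Pi.single m 1) (p - Pi.single m 1) := by
    simp [Matrix.vecMulVec_mul_vecMulVec, Matrix.vecMulVec_smul]
  rw [graphJacobian, graphJacobianInv, mul_sub, mul_one, Matrix.mul_smul, add_mul, one_mul, hsq]
  match_scalars <;> field_simp
  ring

theorem norm_toLp_sub_single_le (m : ι) (p : ι → ℝ) :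
    ‖toLp 2 (p - Pi.single m 1)‖ ≤ ‖toLp 2 p‖ + 1 := by
  simpa [WithLp.toLp_sub] using norm_sub_le (toLp 2 p) (toLp 2 (Pi.single m 1))

theorem norm_vecMulVec_single_sub_single_le (m : ι) (p : ι → ℝ) :
    ‖Matrix.vecMulVec (Pi.single m 1) (p - Pi.single m 1)‖ ≤ ‖toLp 2 p‖ + 1 := by
  refine (frobenius_norm_vecMulVec_le _ _).trans ?_
  simpa using norm_toLp_sub_single_le m p

theorem norm_graphJacobian_le (m : ι) (p : ι → ℝ) :
    ‖graphJacobian m p‖ ≤ ‖(1 : Matrix ι ι ℝ)‖ + (‖toLp 2 p‖ + 1) :=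
  (norm_add_le _ _).trans (by gcongr; exact norm_vecMulVec_single_sub_single_le m p)

theorem norm_graphJacobianInv_le (hp : 0 < p m) :
    ‖graphJacobianInv m p‖ ≤ ‖(1 : Matrix ι ι ℝ)‖ + (p m)⁻¹ * (‖toLp 2 p‖ + 1) := by
  refine (norm_sub_le _ _).trans ?_
  rw [norm_smul, Real.norm_of_nonneg (inv_nonneg.2 hp.le)]
  gcongr
  exact norm_vecMulVec_single_sub_single_le m p

theorem graphJacobian_transpose_mulVec (m : ι) (p u : ι → ℝ) :
    (graphJacobian m p)ᵀ *ᵥ u = u + u m • (p - Pi.single m 1) := by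
  simp [graphJacobian, Matrix.transpose_add, Matrix.transpose_vecMulVec, Matrix.add_mulVec,
    Matrix.vecMulVec_mulVec]

end GraphJacobian

section Straightening

open scoped Matrix Matrix.Norms.Frobenius

open WithLp (toLp)

variable {ι : Type*} [Fintype ι] [DecidableEq ι]

/-- The operator `∂ᵢ^φ`, that is `∂ᵢ` read in the coordinates where `φ` replaces the `m`-th one. -/
noncomputable def straightenedPartialDeriv (m : ι) (φ : (ι → ℝ) → ℝ) (i : ι) (f : (ι → ℝ) → ℝ)
    (x : ι → ℝ) : ℝ :=
  if i = m then partialDeriv m f x / partialDeriv m φ x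
  else partialDeriv i f x - partialDeriv i φ x / partialDeriv m φ x * partialDeriv m f x

/-- The matrix `∇^φ v`, with entry `∂ⱼ^φ vᵢ` in row `i` and column `j`. -/
noncomputable def straightenedJacobian (m : ι) (φ : (ι → ℝ) → ℝ) (v : (ι → ℝ) → ι → ℝ)
    (x : ι → ℝ) : Matrix ι ι ℝ :=
  Matrix.of fun i j => straightenedPartialDeriv m φ j (fun y => v y i) x

/-- The field `v` of the straightened coordinates, viewed as a `1`-form and pulled back to the
original coordinates. -/
noncomputable def graphPullback (m : ι) (φ : (ι → ℝ) → ℝ) (v : (ι → ℝ) → ι → ℝ) (x : ι → ℝ) :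
    ι → ℝ :=
  (graphJacobian m (coordGrad φ x))ᵀ *ᵥ v x

variable {m : ι} {φ : (ι → ℝ) → ℝ} {v : (ι → ℝ) → ι → ℝ} {x : ι → ℝ}

theorem straightenedJacobian_eq_mul (hφ : partialDeriv m φ x ≠ 0) (hv : DifferentiableAt ℝ v x) :
    straightenedJacobian m φ v x = jacobian v x * graphJacobianInv m (coordGrad φ x) := by
  ext i j
  rw [graphJacobianInv, mul_sub, mul_one, Matrix.mul_smul, Matrix.mul_vecMulVec]
  simp only [Matrix.sub_apply, Matrix.smul_apply, Matrix.vecMulVec_apply, Matrix.mulVec_single_one,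
    Matrix.col_apply, jacobian_apply hv, smul_eq_mul, Pi.sub_apply, straightenedJacobian,
    Matrix.of_apply, straightenedPartialDeriv, coordGrad]
  split_ifs with hj
  · subst hj
    rw [Pi.single_eq_same]
    field_simp
    ring
  · rw [Pi.single_eq_of_ne hj]
    ring

theorem straightenedJacobian_mul_graphJacobian (hφ : partialDeriv m φ x ≠ 0)
    (hv : DifferentiableAt ℝ v x) :
    straightenedJacobian m φ v x * graphJacobian m (coordGrad φ x) = jacobian v x := by
  rw [straightenedJacobian_eq_mul hφ hv, mul_assoc,
    mul_eq_one_comm.1 (graphJacobian_mul_graphJacobianInv (p := coordGrad φ x) hφ), mul_one]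

theorem graphPullback_eq_add_smul (m : ι) (φ : (ι → ℝ) → ℝ) (v : (ι → ℝ) → ι → ℝ) :
    graphPullback m φ v = v + (fun x => v x m) • (coordGrad φ - fun _ => Pi.single m 1) :=
  funext fun x => graphJacobian_transpose_mulVec m (coordGrad φ x) (v x)

theorem contDiffOn_coordGrad {s : Set (ι → ℝ)} (hs : IsOpen s) (hφ : ContDiffOn ℝ 2 φ s) :
    ContDiffOn ℝ 1 (coordGrad φ) s :=
  contDiffOn_pi.2 fun _ => (hφ.fderiv_of_isOpen hs (by norm_num)).clm_apply contDiffOn_const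

theorem contDiffOn_graphPullback {s : Set (ι → ℝ)} (hs : IsOpen s) (hφ : ContDiffOn ℝ 2 φ s)
    (hv : ContDiffOn ℝ 1 v s) : ContDiffOn ℝ 1 (graphPullback m φ v) s := by
  rw [graphPullback_eq_add_smul]
  exact hv.add ((contDiffOn_pi.1 hv m).smul ((contDiffOn_coordGrad hs hφ).sub contDiffOn_const))

theorem jacobian_graphPullback (hφ : DifferentiableAt ℝ (coordGrad φ) x)
    (hv : DifferentiableAt ℝ v x) :
    jacobian (graphPullback m φ v) x =
      (graphJacobian m (coordGrad φ x))ᵀ * jacobian v x + v x m • jacobian (coordGrad φ) x := by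
  have hvm : DifferentiableAt ℝ (fun y => v y m) x := differentiableAt_pi.1 hv m
  have hψ : DifferentiableAt ℝ (coordGrad φ - fun _ => Pi.single m 1) x :=
    hφ.sub (differentiableAt_const _)
  have hadd : jacobian (graphPullback m φ v) x = jacobian v x +
      jacobian ((fun y => v y m) • (coordGrad φ - fun _ => Pi.single m 1)) x := by
    rw [graphPullback_eq_add_smul]
    simp [jacobian, fderiv_add hv (hvm.smul hψ)]
  have hsub : jacobian (coordGrad φ - fun _ => Pi.single m 1) x = jacobian (coordGrad φ) x := by
    simp [jacobian, fderiv_sub hφ (differentiableAt_const _)]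
  have hrow : Pi.single m 1 ᵥ* jacobian v x = coordGrad (fun y => v y m) x := by
    ext j
    simp [jacobian_apply hv, coordGrad]
  rw [hadd, jacobian_smul hvm hψ, hsub, graphJacobian, Matrix.transpose_add, Matrix.transpose_one,
    Matrix.transpose_vecMulVec, Matrix.add_mul, one_mul, Matrix.vecMulVec_mul, hrow, add_assoc,
    add_comm (Matrix.vecMulVec _ _), Pi.sub_apply]

theorem symPart_jacobian_graphPullback (hm : partialDeriv m φ x ≠ 0)
    (hφ : DifferentiableAt ℝ (coordGrad φ) x) (hv : DifferentiableAt ℝ v x) :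
    symPart (jacobian (graphPullback m φ v) x) =
      (graphJacobian m (coordGrad φ x))ᵀ * symPart (straightenedJacobian m φ v x) *
        graphJacobian m (coordGrad φ x) + v x m • symPart (jacobian (coordGrad φ) x) := by
  rw [jacobian_graphPullback hφ hv, map_add, map_smul,
    ← straightenedJacobian_mul_graphJacobian hm hv, ← Matrix.mul_assoc, symPart_transpose_mul_mul]

theorem jacobian_eq_mul_sub_of_graphPullback (hm : partialDeriv m φ x ≠ 0)
    (hφ : DifferentiableAt ℝ (coordGrad φ) x) (hv : DifferentiableAt ℝ v x) :
    jacobian v x = (graphJacobianInv m (coordGrad φ x))ᵀ *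
      (jacobian (graphPullback m φ v) x - v x m • jacobian (coordGrad φ) x) := by
  rw [jacobian_graphPullback hφ hv, add_sub_cancel_right, ← Matrix.mul_assoc,
    ← Matrix.transpose_mul, graphJacobian_mul_graphJacobianInv (p := coordGrad φ x) hm,
    Matrix.transpose_one, one_mul]

theorem kornDensity_graphPullback_le {a c M : ℝ} (hc : 0 < c) (hm : c ≤ partialDeriv m φ x)
    (ha : ‖graphJacobian m (coordGrad φ x)‖ ≤ a) (hM : ‖jacobian (coordGrad φ) x‖ ≤ M)
    (hφ : DifferentiableAt ℝ (coordGrad φ) x) (hv : DifferentiableAt ℝ v x) :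
    kornDensity (graphPullback m φ v) x ≤ (2 * a ^ 4 / c + 2 * M ^ 2 + a ^ 2) *
      (‖symPart (straightenedJacobian m φ v x)‖ ^ 2 * partialDeriv m φ x + ‖toLp 2 (v x)‖ ^ 2) := by
  set S := symPart (straightenedJacobian m φ v x)
  have hsym : ‖symPart (jacobian (graphPullback m φ v) x)‖ ≤
      a ^ 2 * ‖S‖ + M * ‖toLp 2 (v x)‖ := by
    rw [symPart_jacobian_graphPullback (hc.trans_le hm).ne' hφ hv]
    refine norm_add_le_of_le ((norm_transpose_mul_mul_le _ _).trans (by gcongr)) ?_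
    exact norm_apply_smul_le _ _ ((norm_symPart_le _).trans hM)
  have hval : ‖toLp 2 (graphPullback m φ v x)‖ ≤ a * ‖toLp 2 (v x)‖ := by
    refine (norm_toLp_mulVec_le _ _).trans ?_
    rw [Matrix.frobenius_norm_transpose]
    gcongr
  have hweight : ‖S‖ ^ 2 ≤ ‖S‖ ^ 2 * partialDeriv m φ x / c := by
    rw [le_div_iff₀ hc]
    gcongr
  have hm₀ : 0 ≤ partialDeriv m φ x := hc.le.trans hm
  calc kornDensity (graphPullback m φ v) x
      ≤ (a ^ 2 * ‖S‖ + M * ‖toLp 2 (v x)‖) ^ 2 + (a * ‖toLp 2 (v x)‖) ^ 2 := by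
        unfold kornDensity
        gcongr
    _ ≤ 2 * ((a ^ 2 * ‖S‖) ^ 2 + (M * ‖toLp 2 (v x)‖) ^ 2) + (a * ‖toLp 2 (v x)‖) ^ 2 := by
        gcongr
        exact add_sq_le
    _ = 2 * a ^ 4 * ‖S‖ ^ 2 + (2 * M ^ 2 + a ^ 2) * ‖toLp 2 (v x)‖ ^ 2 := by ring
    _ ≤ 2 * a ^ 4 * (‖S‖ ^ 2 * partialDeriv m φ x / c) +
          (2 * M ^ 2 + a ^ 2) * ‖toLp 2 (v x)‖ ^ 2 := by gcongr
    _ ≤ 2 * a ^ 4 * (‖S‖ ^ 2 * partialDeriv m φ x / c) +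
          (2 * M ^ 2 + a ^ 2) * ‖toLp 2 (v x)‖ ^ 2 +
          ((2 * M ^ 2 + a ^ 2) * (‖S‖ ^ 2 * partialDeriv m φ x) +
            2 * a ^ 4 / c * ‖toLp 2 (v x)‖ ^ 2) := le_add_of_nonneg_right (by positivity)
    _ = _ := by ring

theorem norm_jacobian_sq_le_graphPullback {b M : ℝ} (hm : partialDeriv m φ x ≠ 0)
    (hb : ‖graphJacobianInv m (coordGrad φ x)‖ ≤ b) (hM : ‖jacobian (coordGrad φ) x‖ ≤ M)
    (hφ : DifferentiableAt ℝ (coordGrad φ) x) (hv : DifferentiableAt ℝ v x) :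
    ‖jacobian v x‖ ^ 2 ≤ 2 * b ^ 2 * (1 + M ^ 2) *
      (‖jacobian (graphPullback m φ v) x‖ ^ 2 + ‖toLp 2 (v x)‖ ^ 2) := by
  set J := jacobian (graphPullback m φ v) x
  have hb₀ : 0 ≤ b := (norm_nonneg _).trans hb
  have hnorm : ‖jacobian v x‖ ≤ b * (‖J‖ + M * ‖toLp 2 (v x)‖) := by
    rw [jacobian_eq_mul_sub_of_graphPullback hm hφ hv]
    refine (Matrix.frobenius_norm_mul _ _).trans ?_
    rw [Matrix.frobenius_norm_transpose]
    gcongr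
    exact norm_sub_le_of_le le_rfl (norm_apply_smul_le _ _ hM)
  calc ‖jacobian v x‖ ^ 2 ≤ b ^ 2 * (‖J‖ + M * ‖toLp 2 (v x)‖) ^ 2 := by
        rw [← mul_pow]
        gcongr
    _ ≤ b ^ 2 * (2 * (‖J‖ ^ 2 + (M * ‖toLp 2 (v x)‖) ^ 2)) := by
        gcongr
        exact add_sq_le
    _ = 2 * b ^ 2 * (‖J‖ ^ 2 + M ^ 2 * ‖toLp 2 (v x)‖ ^ 2) := by ring
    _ ≤ 2 * b ^ 2 * (‖J‖ ^ 2 + M ^ 2 * ‖toLp 2 (v x)‖ ^ 2) +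
          2 * b ^ 2 * (M ^ 2 * ‖J‖ ^ 2 + ‖toLp 2 (v x)‖ ^ 2) :=
        le_add_of_nonneg_right (by positivity)
    _ = _ := by ring

theorem exists_kornDensity_graphPullback_le (m : ι) {c M : ℝ} (hc : 0 < c) (hM : 0 ≤ M) :
    ∃ K : ℝ, 0 < K ∧ ∀ (φ : (ι → ℝ) → ℝ) (v : (ι → ℝ) → ι → ℝ) (x : ι → ℝ),
      c ≤ partialDeriv m φ x → ‖toLp 2 (coordGrad φ x)‖ ≤ M → ‖jacobian (coordGrad φ) x‖ ≤ M →
      DifferentiableAt ℝ (coordGrad φ) x → DifferentiableAt ℝ v x →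
      kornDensity (graphPullback m φ v) x ≤
        K * (‖symPart (straightenedJacobian m φ v x)‖ ^ 2 * partialDeriv m φ x +
          ‖toLp 2 (v x)‖ ^ 2) :=
  ⟨_, by positivity, fun _ _ _ hm hgrad hhess hφ hv => kornDensity_graphPullback_le hc hm
    ((norm_graphJacobian_le _ _).trans (add_le_add_right (add_le_add_left hgrad 1) _)) hhess hφ hv⟩

theorem exists_norm_jacobian_sq_le_graphPullback (m : ι) {c M : ℝ} (hc : 0 < c) (hM : 0 ≤ M) :
    ∃ K : ℝ, 0 < K ∧ ∀ (φ : (ι → ℝ) → ℝ) (v : (ι → ℝ) → ι → ℝ) (x : ι → ℝ),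
      c ≤ partialDeriv m φ x → ‖toLp 2 (coordGrad φ x)‖ ≤ M → ‖jacobian (coordGrad φ) x‖ ≤ M →
      DifferentiableAt ℝ (coordGrad φ) x → DifferentiableAt ℝ v x →
      ‖jacobian v x‖ ^ 2 ≤
        K * (‖jacobian (graphPullback m φ v) x‖ ^ 2 + ‖toLp 2 (v x)‖ ^ 2) := by
  refine ⟨2 * (‖(1 : Matrix ι ι ℝ)‖ + c⁻¹ * (M + 1)) ^ 2 * (1 + M ^ 2), by positivity,
    fun φ v x hm hgrad hhess hφ hv => ?_⟩
  have hm₀ : 0 < coordGrad φ x m := hc.trans_le hm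
  refine norm_jacobian_sq_le_graphPullback hm₀.ne' ((norm_graphJacobianInv_le hm₀).trans ?_)
    hhess hφ hv
  gcongr
  exact hm

theorem exists_korn_straightened (m : ι) {c M : ℝ} (hc : 0 < c) (hM : 0 ≤ M) :
    ∃ C : ℝ, 0 < C ∧ ∀ (φ : (ι → ℝ) → ℝ) (v : (ι → ℝ) → ι → ℝ),
      ContDiffOn ℝ 2 φ (lowerHalfSpace m) →
      (∀ x ∈ lowerHalfSpace m, c ≤ partialDeriv m φ x) →
      (∀ x ∈ lowerHalfSpace m, ‖toLp 2 (coordGrad φ x)‖ ≤ M) →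
      (∀ x ∈ lowerHalfSpace m, ‖jacobian (coordGrad φ) x‖ ≤ M) →
      ContDiffOn ℝ 1 v (lowerHalfSpace m) →
      ∫⁻ x in lowerHalfSpace m, ENNReal.ofReal (‖jacobian v x‖ ^ 2) ≤ ENNReal.ofReal C *
        ((∫⁻ x in lowerHalfSpace m, ENNReal.ofReal
            (‖symPart (straightenedJacobian m φ v x)‖ ^ 2 * partialDeriv m φ x)) +
          ∫⁻ x in lowerHalfSpace m, ENNReal.ofReal (‖toLp 2 (v x)‖ ^ 2)) := by
  obtain ⟨C, hC, hkorn⟩ := exists_korn_lowerHalfSpace m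
  obtain ⟨K₁, hK₁, hdensity⟩ := exists_kornDensity_graphPullback_le m hc hM
  obtain ⟨K₂, hK₂, hjacobian⟩ := exists_norm_jacobian_sq_le_graphPullback m hc hM
  refine ⟨K₂ * (C * K₁ + 1), by positivity, fun φ v hφ hm hgrad hhess hv => ?_⟩
  have hopen := isOpen_lowerHalfSpace m
  have hdφ {x : ι → ℝ} (hx : x ∈ lowerHalfSpace m) : DifferentiableAt ℝ (coordGrad φ) x :=
    ((contDiffOn_coordGrad hopen hφ).contDiffAt (hopen.mem_nhds hx)).differentiableAt one_ne_zero
  have hdv {x : ι → ℝ} (hx : x ∈ lowerHalfSpace m) : DifferentiableAt ℝ v x :=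
    (hv.contDiffAt (hopen.mem_nhds hx)).differentiableAt one_ne_zero
  have hmeas : AEMeasurable (fun x => ‖toLp 2 (v x)‖ ^ 2) (volume.restrict (lowerHalfSpace m)) :=
    (((PiLp.continuous_toLp 2 _).comp_continuousOn hv.continuousOn).norm.pow 2).aemeasurable
      hopen.measurableSet
  set D := ∫⁻ x in lowerHalfSpace m, ENNReal.ofReal
    (‖symPart (straightenedJacobian m φ v x)‖ ^ 2 * partialDeriv m φ x)
  set V := ∫⁻ x in lowerHalfSpace m, ENNReal.ofReal (‖toLp 2 (v x)‖ ^ 2)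
  have hpullback : ∫⁻ x in lowerHalfSpace m,
      ENNReal.ofReal (kornDensity (graphPullback m φ v) x) ≤ ENNReal.ofReal K₁ * (D + V) :=
    setLIntegral_ofReal_le_of_le_mul_add hopen.measurableSet hK₁.le hmeas
      (fun x hx => mul_nonneg (sq_nonneg _) (hc.le.trans (hm x hx))) (fun x _ => sq_nonneg _)
      fun x hx => hdensity φ v x (hm x hx) (hgrad x hx) (hhess x hx) (hdφ hx) (hdv hx)
  calc ∫⁻ x in lowerHalfSpace m, ENNReal.ofReal (‖jacobian v x‖ ^ 2)
      ≤ ENNReal.ofReal K₂ * ((∫⁻ x in lowerHalfSpace m,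
          ENNReal.ofReal (‖jacobian (graphPullback m φ v) x‖ ^ 2)) + V) :=
        setLIntegral_ofReal_le_of_le_mul_add hopen.measurableSet hK₂.le hmeas
          (fun x _ => sq_nonneg _) (fun x _ => sq_nonneg _) fun x hx =>
            hjacobian φ v x (hm x hx) (hgrad x hx) (hhess x hx) (hdφ hx) (hdv hx)
    _ ≤ ENNReal.ofReal K₂ *
          (ENNReal.ofReal C * (ENNReal.ofReal K₁ * (D + V)) + 1 * (D + V)) := by
        gcongr
        · exact (hkorn _ (contDiffOn_graphPullback hopen hφ hv)).trans (by gcongr)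
        · rw [one_mul]
          exact le_add_self
    _ = ENNReal.ofReal (K₂ * (C * K₁ + 1)) * (D + V) := by
        rw [ENNReal.ofReal_mul hK₂.le, ENNReal.ofReal_add (by positivity) zero_le_one,
          ENNReal.ofReal_mul hC.le, ENNReal.ofReal_one]
        ring

theorem norm_jacobian_coordGrad_sq (hφ : DifferentiableAt ℝ (coordGrad φ) x) :
    ‖jacobian (coordGrad φ) x‖ ^ 2 = ∑ i, ∑ j, partialDeriv i (partialDeriv j φ) x ^ 2 := by
  simp only [frobenius_norm_sq, jacobian_apply hφ]
  exact Finset.sum_comm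

theorem norm_symPart_straightenedJacobian_sq (m : ι) (φ : (ι → ℝ) → ℝ) (v : (ι → ℝ) → ι → ℝ)
    (x : ι → ℝ) :
    ‖symPart (straightenedJacobian m φ v x)‖ ^ 2 =
      ∑ i, ∑ j, ((straightenedPartialDeriv m φ j (fun y => v y i) x +
        straightenedPartialDeriv m φ i (fun y => v y j) x) / 2) ^ 2 := by
  simp [frobenius_norm_sq, symPart_apply, straightenedJacobian, inv_mul_eq_div, add_div]

theorem korn_adapted_general (m : ι) {c₀ : ℝ} (hc₀ : 0 < c₀) :
    ∃ C : ℝ, 0 < C ∧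
      ∀ (φ : (ι → ℝ) → ℝ) (v : (ι → ℝ) → ι → ℝ),
        ContDiffOn ℝ 2 φ (lowerHalfSpace m) →
        (∀ x ∈ lowerHalfSpace m, c₀ ≤ partialDeriv m φ x) →
        (∀ x ∈ lowerHalfSpace m,
          √(∑ i, partialDeriv i φ x ^ 2) +
            √(∑ i, ∑ j, partialDeriv i (partialDeriv j φ) x ^ 2) ≤ 1 / c₀) →
        ContDiffOn ℝ 1 v (lowerHalfSpace m) →
        ∫⁻ x in lowerHalfSpace m,
            ENNReal.ofReal (∑ i, ∑ j, partialDeriv j (fun y => v y i) x ^ 2)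
          ≤ ENNReal.ofReal C *
            ((∫⁻ x in lowerHalfSpace m,
                ENNReal.ofReal
                  ((∑ i, ∑ j, ((straightenedPartialDeriv m φ j (fun y => v y i) x +
                      straightenedPartialDeriv m φ i (fun y => v y j) x) / 2) ^ 2)
                    * partialDeriv m φ x))
              + ∫⁻ x in lowerHalfSpace m, ENNReal.ofReal (∑ i, v x i ^ 2)) := by
  obtain ⟨C, hC, hkorn⟩ := exists_korn_straightened m hc₀ (one_div_pos.2 hc₀).le
  refine ⟨C, hC, fun φ v hφ hm hbound hv => ?_⟩
  have hopen := isOpen_lowerHalfSpace m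
  have hgrad (x : ι → ℝ) : ‖toLp 2 (coordGrad φ x)‖ = √(∑ i, partialDeriv i φ x ^ 2) := by
    simp [EuclideanSpace.norm_eq, coordGrad]
  have hhess (x : ι → ℝ) (hx : x ∈ lowerHalfSpace m) : ‖jacobian (coordGrad φ) x‖ =
      √(∑ i, ∑ j, partialDeriv i (partialDeriv j φ) x ^ 2) := by
    rw [← norm_jacobian_coordGrad_sq (((contDiffOn_coordGrad hopen hφ).contDiffAt
      (hopen.mem_nhds hx)).differentiableAt one_ne_zero), Real.sqrt_sq (norm_nonneg _)]
  have hjac (x : ι → ℝ) (hx : x ∈ lowerHalfSpace m) :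
      ‖jacobian v x‖ ^ 2 = ∑ i, ∑ j, partialDeriv j (fun y => v y i) x ^ 2 := by
    simp only [frobenius_norm_sq, jacobian_apply
      ((hv.contDiffAt (hopen.mem_nhds hx)).differentiableAt one_ne_zero)]
  have h := hkorn φ v hφ hm
    (fun x hx => (hgrad x).trans_le <|
      (le_add_of_nonneg_right (Real.sqrt_nonneg _)).trans (hbound x hx))
    (fun x hx => (hhess x hx).trans_le <|
      (le_add_of_nonneg_left (Real.sqrt_nonneg _)).trans (hbound x hx)) hv
  rw [setLIntegral_congr_fun hopen.measurableSet fun x hx => by rw [hjac x hx]] at h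
  simpa only [norm_symPart_straightenedJacobian_sq, EuclideanSpace.real_norm_sq_eq] using h

end Straightening

/-- Proposition 2.4 of the paper (Korn inequality adapted to the fluid domain):
if `∂_zφ ≥ c₀` and `|∇φ| + |∇²φ| ≤ 1/c₀` then
`∫_S |∇v|² ≤ C(c₀) (∫_S |S^φ v|² ∂_zφ + ∫_S |v|²)`. -/
theorem korn_adapted (c₀ : ℝ) (hc₀ : 0 < c₀) :
    ∃ C : ℝ, 0 < C ∧
      ∀ (φ : (Fin 3 → ℝ) → ℝ) (v : (Fin 3 → ℝ) → Fin 3 → ℝ),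
        ContDiffOn ℝ 2 φ lowerHalf →
        (∀ x ∈ lowerHalf, c₀ ≤ pd 2 φ x) →
        (∀ x ∈ lowerHalf,
          Real.sqrt (∑ i : Fin 3, (pd i φ x) ^ 2)
            + Real.sqrt (∑ i : Fin 3, ∑ j : Fin 3, (pd i (pd j φ) x) ^ 2) ≤ 1 / c₀) →
        ContDiffOn ℝ 1 v lowerHalf →
        IntegrableOn (fun x => ∑ i : Fin 3, (v x i) ^ 2) lowerHalf volume →
        IntegrableOn (fun x => ∑ i : Fin 3, ∑ j : Fin 3, (pd j (fun y => v y i) x) ^ 2)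
          lowerHalf volume →
        ∫⁻ x in lowerHalf,
            ENNReal.ofReal (∑ i : Fin 3, ∑ j : Fin 3, (pd j (fun y => v y i) x) ^ 2)
          ≤ ENNReal.ofReal C *
            ((∫⁻ x in lowerHalf,
                ENNReal.ofReal
                  ((∑ i : Fin 3, ∑ j : Fin 3,
                      ((pdphi φ j (fun y => v y i) x + pdphi φ i (fun y => v y j) x) / 2) ^ 2)
                    * pd 2 φ x))
              + ∫⁻ x in lowerHalf, ENNReal.ofReal (∑ i : Fin 3, (v x i) ^ 2)) := by
  obtain ⟨C, hC, hkorn⟩ := korn_adapted_general (2 : Fin 3) hc₀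
  exact ⟨C, hC, fun φ v hφ hm hbound hv _ _ => hkorn φ v hφ hm hbound hv⟩
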